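/- Let A be a commutative semiring and ⋀ the exterior semialgebra over A. For every r ≥ 1 and every partition λ = (λ_1 ≥ ⋯ ≥ λ_r) with at most r parts: (σ_+(z)x^0) ∧ [x]^r_λ ⪯ z^r · σ_+(z)(σ̄_-(z)(x^{r+λ_1} ∧ x^{r−1+λ_2} ∧ ⋯ ∧ x^{1+λ_r} ∧ x^0)), where the inequality is coefficientwise in the powers of z (each coefficient of the right-hand side equals the corresponding coefficient of the left-hand side plus a quasi-zero). -/

import Mathlib

/-!  The exterior semialgebra over a commutative semiring `A`, following
Chapman–Gatto–Rowen.  It is the free `A`-module on the basis consisting of a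
unit symbol `1` (here `none`) together with all pairs `(ε, s)` where
`ε ∈ {+1, −1}` (here a `Bool`, `true = +1`) and `s` is a strictly decreasing
nonempty tuple of natural numbers (here a nonempty `Finset ℕ`, read in
decreasing order).  -/

namespace ExtSemi

/-- The basis: `none` is the unit `1`; `some (ε, s)` is the sign `ε` times the
strictly decreasing wedge monomial on the nonempty finite set `s`. -/
abbrev XB : Type := Option (Bool × {s : Finset ℕ // s.Nonempty})

variable (A : Type*) [CommSemiring A]

/-- The exterior semialgebra `⋀`: the free `A`-module on `XB`. -/
abbrev Ext : Type _ := XB →₀ A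

/-- Sign flip on the basis; the unit is fixed. -/
def negB : XB → XB
  | none => none
  | some (ε, s) => some (!ε, s)

/-- The negation map `(−)` on `⋀`: the `A`-linear map sending `(ε, s)` to
`(−ε, s)` and fixing `1`. -/
noncomputable def neg : Ext A →ₗ[A] Ext A := Finsupp.lmapDomain A A negB

/-- The signed basis element attached to a sign and a finite set; the empty set
gives the unit (on which the negation acts trivially). -/
noncomputable def bElem (ε : Bool) (t : Finset ℕ) : Ext A :=
  if h : t.Nonempty then Finsupp.single (some (ε, ⟨t, h⟩)) 1 else Finsupp.single none 1

/-- The unit `1` of `⋀`. -/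
noncomputable def one : Ext A := Finsupp.single (none : XB) 1

/-- The generator `x^i`. -/
noncomputable def xg (i : ℕ) : Ext A := bElem A true {i}

/-- `true` iff merging the decreasing enumerations of the disjoint sets `s`, `t`
(concatenated as `s ++ t`) into a single decreasing enumeration is an even
permutation, i.e. iff the number of pairs `(a ∈ s, b ∈ t)` with `a < b` is even. -/
def mergeEven (s t : Finset ℕ) : Bool :=
  decide ((∑ a ∈ s, (t.filter (fun b => a < b)).card) % 2 = 0)

/-- Wedge product of two basis elements: concatenate the tuples and multiply the
signs (`0` if the tuples share an entry). -/
noncomputable def wB : XB → XB → Ext A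
  | none, c => Finsupp.single c 1
  | some b, none => Finsupp.single (some b) 1
  | some (ε, s), some (δ, t) =>
      if s.1 ∩ t.1 = ∅ then bElem A ((ε == δ) == mergeEven s.1 t.1) (s.1 ∪ t.1) else 0

/-- The wedge product on `⋀`, extended `A`-bilinearly from the basis. -/
noncomputable def wedge (u v : Ext A) : Ext A :=
  u.sum fun b a => v.sum fun c a' => (a * a') • wB A b c

/-- Extend a map defined on the basis `A`-linearly to all of `⋀`. -/
noncomputable def ext1 (g : XB → Ext A) (u : Ext A) : Ext A := u.sum fun b a => a • g b

/-- Quasi-zeros: elements of the form `w + (−)w`. -/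
def IsQuasiZero (q : Ext A) : Prop := ∃ w : Ext A, q = w + neg A w

/-- The surpassing relation: `u ⪯ v` iff `v = u + q` for some quasi-zero `q`. -/
def Prec (u v : Ext A) : Prop := ∃ q : Ext A, IsQuasiZero A q ∧ v = u + q

/-- Twist an element by a sign. -/
noncomputable def twist (ε : Bool) (u : Ext A) : Ext A := if ε then u else neg A u

/-- `k`-fold application of the negation map. -/
noncomputable def negpow (k : ℕ) (u : Ext A) : Ext A := if k % 2 = 0 then u else neg A u

/-- Wedge product of a list of elements of `⋀`. -/
noncomputable def wedgeL (l : List (Ext A)) : Ext A := l.foldr (wedge A) (one A)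

/-- The wedge monomial `x^{j_1} ∧ ⋯ ∧ x^{j_r}` for an arbitrary tuple. -/
noncomputable def wedgeMon (l : List ℕ) : Ext A := wedgeL A (l.map (xg A))

/-- The decreasing enumeration of a finite set of naturals. -/
def descList (s : Finset ℕ) : List ℕ := (s.sort (· ≤ ·)).reverse

/-- The contraction `∂^j ⌟` on basis elements:
`∂^j ⌟ (x^{i_1} ∧ ⋯ ∧ x^{i_r}) = Σ_k (−)^{k−1}[i_k = j]·x^{i_1} ∧ ⋯ ∧ x^{i_{k-1}} ∧ x^{i_{k+1}} ∧ ⋯ ∧ x^{i_r}`,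
`∂^j ⌟ 1 = 0`; it commutes with the negation map. -/
noncomputable def contraB (j : ℕ) : XB → Ext A
  | none => 0
  | some (ε, s) =>
      if j ∈ s.1 then
        twist A ε (negpow A ((s.1.filter (fun b => j < b)).card) (bElem A true (s.1.erase j)))
      else 0

/-- The contraction `∂^j ⌟` on `⋀`, extended `A`-linearly. -/
noncomputable def contra (j : ℕ) (u : Ext A) : Ext A := ext1 A (contraB A j) u

/-- Make an `A`-linear operator on `⋀` commuting with the negation map out of a
coefficient family on decreasing lists (`F k l` = the `k`-th coefficient on the
monomial with decreasing tuple `l`); the unit is sent to itself in degree `0`. -/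
noncomputable def hsOn (F : ℕ → List ℕ → Ext A) (k : ℕ) : XB → Ext A
  | none => if k = 0 then one A else 0
  | some (ε, s) => twist A ε (F k (descList s.1))

open Finset.Nat in
/-- Coefficient of `z^k` in `σ₊(z)` on a monomial:
`σ_k (x^{i_1} ∧ ⋯ ∧ x^{i_r}) = Σ_{k_1+⋯+k_r=k} x^{i_1+k_1} ∧ ⋯ ∧ x^{i_r+k_r}`. -/
noncomputable def sigPlusL (k : ℕ) (l : List ℕ) : Ext A :=
  ∑ c ∈ antidiagonalTuple l.length k,
    wedgeMon A (List.ofFn fun i : Fin l.length => l.get i + c i)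

/-- Coefficient of `z^k` in the Schubert derivation `σ₊(z)`. -/
noncomputable def sigPlus (k : ℕ) : Ext A → Ext A := ext1 A (hsOn A (sigPlusL A) k)

open Finset.Nat in
/-- Coefficient of `w^{−k}` in `σ₋(w)`, where `σ₋(w) x^j = Σ_{k=0}^{j} x^{j−k} w^{−k}`. -/
noncomputable def sigMinusL (k : ℕ) (l : List ℕ) : Ext A :=
  ∑ c ∈ antidiagonalTuple l.length k,
    if ∀ i, c i ≤ l.get i then
      wedgeMon A (List.ofFn fun i : Fin l.length => l.get i - c i)
    else 0

/-- Coefficient of `w^{−k}` in the Schubert derivation `σ₋(w)`. -/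
noncomputable def sigMinus (k : ℕ) : Ext A → Ext A := ext1 A (hsOn A (sigMinusL A) k)

open Finset.Nat in
/-- Coefficient of `z^{−k}` in `σ̄₋(z)`, where `σ̄₋(z) x^j = x^j + ((−)x^{j−1}) z^{−1}`
(`x^{−1} := 0`). -/
noncomputable def sbarMinusL (k : ℕ) (l : List ℕ) : Ext A :=
  negpow A k (∑ c ∈ antidiagonalTuple l.length k,
    if ∀ i, c i ≤ 1 ∧ c i ≤ l.get i then
      wedgeMon A (List.ofFn fun i : Fin l.length => l.get i - c i)
    else 0)

/-- Coefficient of `z^{−k}` in the Schubert derivation `σ̄₋(z)`. -/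
noncomputable def sbarMinus (k : ℕ) : Ext A → Ext A := ext1 A (hsOn A (sbarMinusL A) k)

open Finset.Nat in
/-- Coefficient of `w^k` in `σ̄₊(w)`, where `σ̄₊(w) x^j = x^j + ((−)x^{j+1}) w`. -/
noncomputable def sbarPlusL (k : ℕ) (l : List ℕ) : Ext A :=
  negpow A k (∑ c ∈ antidiagonalTuple l.length k,
    if ∀ i, c i ≤ 1 then
      wedgeMon A (List.ofFn fun i : Fin l.length => l.get i + c i)
    else 0)

/-- Coefficient of `w^k` in the Schubert derivation `σ̄₊(w)`. -/
noncomputable def sbarPlus (k : ℕ) : Ext A → Ext A := ext1 A (hsOn A (sbarPlusL A) k)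

/-- The basis element `[x]^r_λ = x^{r−1+λ_1} ∧ x^{r−2+λ_2} ∧ ⋯ ∧ x^{λ_r}`
attached to a partition `λ` with at most `r` parts. -/
noncomputable def xlam (r : ℕ) (lam : Fin r → ℕ) : Ext A :=
  wedgeMon A (List.ofFn fun i : Fin r => (r - 1 - (i : ℕ)) + lam i)

end ExtSemi

/-!
Over a commutative ring, where `(−)` may be read as multiplication by `-1`, the two sides agree:
`σ₊(z)σ̄₋(z)` telescopes, since `σ₊(z)(x^{j+1} - z^{-1} x^j) = -z^{-1} x^j`, so that
`σ₊(z)σ̄₋(z)(x^{m_1+1} ∧ ⋯ ∧ x^{m_r+1} ∧ x^0)` is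
`(-1)^r z^{-r} x^{m_1} ∧ ⋯ ∧ x^{m_r} ∧ σ₊(z)x^0 = z^{-r} σ₊(z)x^0 ∧ x^{m_1} ∧ ⋯ ∧ x^{m_r}`.
Evaluating at a coordinate of the usual exterior algebra, this is an identity of determinants.

Over `ℕ` one can cancel, and the left-hand side does not involve a basis element together with its
negative; equality of the signed coefficients then already gives surpassing.  Finally every
commutative semiring receives a homomorphism from `ℕ`, under which all constructions are natural.
-/

namespace ExtSemi

open Finset PowerSeries

section Linearity

variable {A : Type*} [CommSemiring A]

theorem ext1_eq_linearCombination (g : XB → Ext A) : ext1 A g = Finsupp.linearCombination A g := rfl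

theorem wedge_eq_linearCombination (u v : Ext A) :
    wedge A u v =
      Finsupp.linearCombination A (fun b => Finsupp.linearCombination A (wB A b) v) u := by
  simp [wedge, Finsupp.linearCombination_apply, Finsupp.smul_sum, smul_smul]

theorem wedge_single_one (b : XB) (v : Ext A) :
    wedge A (Finsupp.single b 1) v = Finsupp.linearCombination A (wB A b) v := by
  simp [wedge_eq_linearCombination]

theorem wedge_zero (u : Ext A) : wedge A u 0 = 0 := by
  simp [wedge]

theorem wedgeMon_cons (i : ℕ) (l : List ℕ) :
    wedgeMon A (i :: l) = wedge A (xg A i) (wedgeMon A l) := rfl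

@[simp]
theorem negB_negB (b : XB) : negB (negB b) = b := by
  rcases b with _ | ⟨ε, s⟩ <;> simp [negB]

@[simp]
theorem neg_single (b : XB) (a : A) :
    neg A (Finsupp.single b a) = Finsupp.single (negB b) a := by
  simp [neg, Finsupp.mapDomain_single]

theorem neg_apply (u : Ext A) (b : XB) : neg A u b = u (negB b) := by
  conv_lhs => rw [← negB_negB b]
  exact Finsupp.mapDomain_apply (Function.LeftInverse.injective negB_negB) u (negB b)

@[simp]
theorem neg_neg (u : Ext A) : neg A (neg A u) = u := by
  ext b
  simp [neg_apply]

theorem hsOn_negB (F : ℕ → List ℕ → Ext A) (k : ℕ) (b : XB) :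
    hsOn A F k (negB b) = neg A (hsOn A F k b) := by
  rcases b with _ | ⟨_ | _, s⟩
  · by_cases hk : k = 0 <;> simp [hsOn, negB, one, hk]
  all_goals simp [hsOn, negB, twist]

theorem ext1_hsOn_neg (F : ℕ → List ℕ → Ext A) (k : ℕ) (u : Ext A) :
    ext1 A (hsOn A F k) (neg A u) = neg A (ext1 A (hsOn A F k) u) := by
  rw [ext1_eq_linearCombination]
  induction u using Finsupp.induction_linear with
  | zero => simp
  | add u v hu hv => simp [hu, hv]
  | single b a => simp [hsOn_negB]

theorem sigPlus_negpow (k d : ℕ) (u : Ext A) :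
    sigPlus A k (negpow A d u) = negpow A d (sigPlus A k u) := by
  unfold negpow
  split_ifs
  · rfl
  · exact ext1_hsOn_neg _ k u

end Linearity

section Monomials

variable (A : Type*) [CommSemiring A]

/-- The set of exponents of a basis element; it is empty for the unit. -/
def indexSet : XB → Finset ℕ
  | none => ∅
  | some (_, s) => s.1

/-- The sign of a basis element, the unit counting as positive. -/
def signB : XB → Bool
  | none => true
  | some (ε, _) => ε

/-- The signed basis element `x^i ∧ b`, for `i` not an exponent of `b`. -/
def insertB (i : ℕ) (b : XB) : XB :=
  some (signB b == decide (Even #{j ∈ indexSet b | i < j}),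
    ⟨insert i (indexSet b), insert_nonempty _ _⟩)

@[simp]
theorem indexSet_insertB (i : ℕ) (b : XB) : indexSet (insertB i b) = insert i (indexSet b) := rfl

theorem signB_insertB (i : ℕ) (b : XB) :
    signB (insertB i b) = (signB b == decide (Even #{j ∈ indexSet b | i < j})) := rfl

theorem xg_eq_single (i : ℕ) :
    xg A i = Finsupp.single (some (true, ⟨{i}, singleton_nonempty i⟩)) 1 := by
  simp [xg, bElem]

theorem wB_generator (i : ℕ) (b : XB) :
    wB A (some (true, ⟨{i}, singleton_nonempty i⟩)) b =
      if i ∈ indexSet b then 0 else Finsupp.single (insertB i b) 1 := by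
  rcases b with _ | ⟨ε, s⟩
  · simp [wB, indexSet, insertB, signB]
  · by_cases hi : i ∈ s.1
    · simp [wB, indexSet, hi]
    · simp [wB, indexSet, insertB, signB, hi, bElem, mergeEven, Nat.even_iff]

theorem xg_wedge (i : ℕ) (u : Ext A) :
    wedge A (xg A i) u = Finsupp.linearCombination A
      (fun b => if i ∈ indexSet b then 0 else Finsupp.single (insertB i b) 1) u := by
  simp only [xg_eq_single, wedge_single_one, ← wB_generator]

theorem wedgeMon_singleton (i : ℕ) : wedgeMon A [i] = xg A i := by
  change wedge A (xg A i) (Finsupp.single none 1) = xg A i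
  rw [xg_wedge]
  simp [xg_eq_single, indexSet, insertB, signB]

theorem exists_wedgeMon_eq_single {l : List ℕ} (hl : l.Nodup) :
    ∃ b, indexSet b = l.toFinset ∧ wedgeMon A l = Finsupp.single b 1 := by
  induction l with
  | nil => exact ⟨none, rfl, rfl⟩
  | cons i l ih =>
    obtain ⟨hi, hl⟩ := List.nodup_cons.1 hl
    obtain ⟨b, hb, hlb⟩ := ih hl
    refine ⟨insertB i b, by simp [hb], ?_⟩
    simp [wedgeMon_cons, hlb, xg_wedge, hb, hi]

theorem wedgeMon_of_not_nodup {l : List ℕ} (hl : ¬ l.Nodup) : wedgeMon A l = 0 := by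
  induction l with
  | nil => exact absurd List.nodup_nil hl
  | cons i l ih =>
    rw [wedgeMon_cons]
    by_cases hl' : l.Nodup
    · have hi : i ∈ l := by simpa [hl'] using hl
      obtain ⟨b, hb, hlb⟩ := exists_wedgeMon_eq_single A hl'
      simp [hlb, xg_wedge, hb, hi]
    · rw [ih hl', wedge_zero]

theorem xg_wedge_bElem_true {i : ℕ} {t : Finset ℕ} (ht : ∀ j ∈ t, j < i) :
    wedge A (xg A i) (bElem A true t) = bElem A true (insert i t) := by
  have hi : i ∉ t := fun h => lt_irrefl i (ht i h)
  have habove : t.filter (i < ·) = ∅ := filter_eq_empty_iff.2 fun j hj => (ht j hj).asymm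
  rcases t.eq_empty_or_nonempty with rfl | hne
  · exact wedgeMon_singleton A i
  · simp [xg_wedge, bElem, hne, indexSet, insertB, signB, hi, habove]

theorem wedgeMon_of_sortedGT {l : List ℕ} (hl : l.SortedGT) :
    wedgeMon A l = bElem A true l.toFinset := by
  induction l with
  | nil => rfl
  | cons i l ih =>
    obtain ⟨hi, hl⟩ := List.pairwise_cons.1 hl.pairwise
    rw [wedgeMon_cons, ih hl.sortedGT, xg_wedge_bElem_true A (by simpa using hi),
      List.toFinset_cons]

theorem descList_toFinset {l : List ℕ} (hl : l.SortedGT) : descList l.toFinset = l := by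
  have hsort : l.reverse.toFinset.sort (· ≤ ·) = l.reverse :=
    (List.toFinset_sort (· ≤ ·) (List.nodup_reverse.2 hl.nodup)).2
      (List.sortedLT_reverse.2 hl).sortedLE.pairwise
  rw [descList, ← List.toFinset_reverse, hsort, List.reverse_reverse]

theorem ext1_hsOn_wedgeMon (F : ℕ → List ℕ → Ext A) (k : ℕ) {l : List ℕ} (hne : l ≠ [])
    (hl : l.SortedGT) : ext1 A (hsOn A F k) (wedgeMon A l) = F k l := by
  have hl' : l.toFinset.Nonempty := by simpa using hne
  simp [wedgeMon_of_sortedGT A hl, bElem, hl', ext1_eq_linearCombination, hsOn, twist,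
    descList_toFinset hl]

theorem sigPlusL_ofFn (k : ℕ) {n : ℕ} (f : Fin n → ℕ) :
    sigPlusL A k (List.ofFn f) =
      ∑ c ∈ Nat.antidiagonalTuple n k, wedgeMon A (List.ofFn (f + c)) := by
  generalize hl : List.ofFn f = l
  obtain rfl : l.length = n := by simp [← hl]
  obtain rfl : f = l.get := List.ofFn_injective (by simp [hl])
  rfl

/-- The exponents of `z⁻¹` in the expansion of `σ̄₋(z)(x^{f_1} ∧ ⋯ ∧ x^{f_n})`: the tuple `c`
belongs to the term in which the `i`-th factor is `(−)^{c_i} x^{f_i - c_i} z^{-c_i}`, and `c_i = 1`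
is excluded for `f_i = 0`. -/
def sbarMinusExponents {n : ℕ} (f : Fin n → ℕ) : Finset (Fin n → ℕ) :=
  Fintype.piFinset fun i => Iic (min 1 (f i))

theorem le_one_of_mem_sbarMinusExponents {n : ℕ} {f c : Fin n → ℕ}
    (hc : c ∈ sbarMinusExponents f) (i : Fin n) : c i ≤ 1 :=
  (le_min_iff.1 (mem_Iic.1 (Fintype.mem_piFinset.1 hc i))).1

theorem sbarMinusL_ofFn (d : ℕ) {n : ℕ} (f : Fin n → ℕ) :
    sbarMinusL A d (List.ofFn f) =
      negpow A d (∑ c ∈ sbarMinusExponents f with ∑ i, c i = d,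
        wedgeMon A (List.ofFn (f - c))) := by
  generalize hl : List.ofFn f = l
  obtain rfl : l.length = n := by simp [← hl]
  obtain rfl : f = l.get := List.ofFn_injective (by simp [hl])
  rw [sbarMinusL, ← sum_filter]
  congr 1
  refine sum_congr ?_ fun _ _ => rfl
  ext c
  simp [sbarMinusExponents, Nat.mem_antidiagonalTuple, and_comm]

end Monomials

section Homogeneous

variable (A : Type*) [CommSemiring A]

/-- The submodule of elements of degree `n`, spanned by the basis elements `(ε, s)` with `s` of
size `n` (and by the unit if `n = 0`). -/
def homogeneous (n : ℕ) : Submodule A (Ext A) := Finsupp.supported A A {b | #(indexSet b) = n}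

variable {A}

theorem neg_mem_homogeneous {n : ℕ} {u : Ext A} (hu : u ∈ homogeneous A n) :
    neg A u ∈ homogeneous A n := by
  refine (Finsupp.mem_supported' _ _).2 fun b hb => ?_
  rw [neg_apply]
  refine (Finsupp.mem_supported' _ _).1 hu _ ?_
  rcases b with _ | b <;> exact hb

theorem negpow_mem_homogeneous (k : ℕ) {n : ℕ} {u : Ext A} (hu : u ∈ homogeneous A n) :
    negpow A k u ∈ homogeneous A n := by
  unfold negpow
  split_ifs
  exacts [hu, neg_mem_homogeneous hu]

theorem wedgeMon_mem_homogeneous (l : List ℕ) : wedgeMon A l ∈ homogeneous A l.length := by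
  by_cases hl : l.Nodup
  · obtain ⟨b, hb, hlb⟩ := exists_wedgeMon_eq_single A hl
    rw [hlb]
    refine Finsupp.single_mem_supported A 1 ?_
    rw [Set.mem_ofPred_eq, hb, List.toFinset_card_of_nodup hl]
  · rw [wedgeMon_of_not_nodup A hl]
    exact zero_mem _

theorem hsOn_mem_homogeneous {F : ℕ → List ℕ → Ext A} {k : ℕ}
    (hF : ∀ l, F k l ∈ homogeneous A l.length) (b : XB) :
    hsOn A F k b ∈ homogeneous A #(indexSet b) := by
  rcases b with _ | ⟨ε, s⟩
  · rw [hsOn]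
    split_ifs
    exacts [wedgeMon_mem_homogeneous [], zero_mem _]
  · have hs : F k (descList s.1) ∈ homogeneous A #s.1 := by
      simpa [descList] using hF (descList s.1)
    cases ε
    exacts [neg_mem_homogeneous hs, hs]

theorem ext1_hsOn_mem_homogeneous {F : ℕ → List ℕ → Ext A} {k : ℕ}
    (hF : ∀ l, F k l ∈ homogeneous A l.length) {n : ℕ} {u : Ext A} (hu : u ∈ homogeneous A n) :
    ext1 A (hsOn A F k) u ∈ homogeneous A n := by
  refine Submodule.sum_mem _ fun b hb => Submodule.smul_mem _ _ ?_
  have hbn : #(indexSet b) = n := (Finsupp.mem_supported A u).1 hu hb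
  exact hbn ▸ hsOn_mem_homogeneous hF b

theorem sigPlus_mem_homogeneous (k : ℕ) {n : ℕ} {u : Ext A} (hu : u ∈ homogeneous A n) :
    sigPlus A k u ∈ homogeneous A n := by
  refine ext1_hsOn_mem_homogeneous (fun l => Submodule.sum_mem _ fun c _ => ?_) hu
  simpa using wedgeMon_mem_homogeneous (A := A) (List.ofFn fun i => l.get i + c i)

theorem sbarMinus_mem_homogeneous (d : ℕ) {n : ℕ} {u : Ext A} (hu : u ∈ homogeneous A n) :
    sbarMinus A d u ∈ homogeneous A n := by
  refine ext1_hsOn_mem_homogeneous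
    (fun l => negpow_mem_homogeneous d (Submodule.sum_mem _ fun c _ => ?_)) hu
  split_ifs
  · simpa using wedgeMon_mem_homogeneous (A := A) (List.ofFn fun i => l.get i - c i)
  · exact zero_mem _

variable (A)

/-- The coefficient of `z^N` in `z^n σ₊(z)σ̄₋(z)u`, for `u` of degree at most `n`: then `σ̄₋(z)u`
has no terms in `z^{-d}` with `d > n`, so that `σ₊_b` contributes only for `b ≤ N`. -/
noncomputable def sigPlusSbarMinus (n N : ℕ) (u : Ext A) : Ext A :=
  ∑ b ∈ range (N + 1), if N ≤ b + n then sigPlus A b (sbarMinus A (b + n - N) u) else 0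

variable {A}

theorem sigPlusSbarMinus_mem_homogeneous (n N : ℕ) {m : ℕ} {u : Ext A}
    (hu : u ∈ homogeneous A m) : sigPlusSbarMinus A n N u ∈ homogeneous A m := by
  refine Submodule.sum_mem _ fun b _ => ?_
  split_ifs
  · exact sigPlus_mem_homogeneous b (sbarMinus_mem_homogeneous _ hu)
  · exact zero_mem _

end Homogeneous

section Naturality

variable {A B : Type*} [CommSemiring A] [CommSemiring B] (f : A →+* B)

/-- Extension of scalars `⋀_A → ⋀_B` along a homomorphism `A → B`. -/
noncomputable def extMap : Ext A →+ Ext B := Finsupp.mapRange.addMonoidHom f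

@[simp]
theorem extMap_single (b : XB) (a : A) :
    extMap f (Finsupp.single b a) = Finsupp.single b (f a) := by
  simp [extMap]

theorem extMap_apply (u : Ext A) (b : XB) : extMap f u b = f (u b) := rfl

theorem extMap_smul (a : A) (u : Ext A) : extMap f (a • u) = f a • extMap f u := by
  ext b
  simp [extMap_apply]

theorem extMap_neg (u : Ext A) : extMap f (neg A u) = neg B (extMap f u) := by
  ext b
  simp [extMap_apply, neg_apply]

theorem extMap_linearCombination {g : XB → Ext A} {g' : XB → Ext B}
    (h : ∀ b, extMap f (g b) = g' b) (u : Ext A) :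
    extMap f (Finsupp.linearCombination A g u) = Finsupp.linearCombination B g' (extMap f u) := by
  induction u using Finsupp.induction_linear with
  | zero => simp
  | add u v hu hv => simp [hu, hv]
  | single b a => simp [extMap_smul, h]

theorem extMap_bElem (ε : Bool) (t : Finset ℕ) : extMap f (bElem A ε t) = bElem B ε t := by
  unfold bElem
  split_ifs <;> simp

theorem extMap_wB (b c : XB) : extMap f (wB A b c) = wB B b c := by
  rcases b with _ | ⟨ε, s⟩ <;> rcases c with _ | ⟨δ, t⟩ <;>
    simp [wB, apply_ite (extMap f), extMap_bElem]

theorem extMap_wedge (u v : Ext A) :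
    extMap f (wedge A u v) = wedge B (extMap f u) (extMap f v) := by
  simp only [wedge_eq_linearCombination]
  exact extMap_linearCombination f
    (fun b => extMap_linearCombination f (fun c => extMap_wB f b c) v) u

theorem extMap_wedgeMon (l : List ℕ) : extMap f (wedgeMon A l) = wedgeMon B l := by
  induction l with
  | nil => simp [wedgeMon, wedgeL, one]
  | cons i l ih => rw [wedgeMon_cons, wedgeMon_cons, extMap_wedge, ih, xg, extMap_bElem, xg]

theorem extMap_negpow (k : ℕ) (u : Ext A) : extMap f (negpow A k u) = negpow B k (extMap f u) := by
  simp [negpow, apply_ite (extMap f), extMap_neg]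

theorem extMap_hsOn {F : ℕ → List ℕ → Ext A} {F' : ℕ → List ℕ → Ext B} (k : ℕ)
    (h : ∀ l, extMap f (F k l) = F' k l) (b : XB) :
    extMap f (hsOn A F k b) = hsOn B F' k b := by
  rcases b with _ | ⟨ε, s⟩ <;> simp [hsOn, twist, one, apply_ite (extMap f), extMap_neg, h]

theorem extMap_sigPlus (k : ℕ) (u : Ext A) :
    extMap f (sigPlus A k u) = sigPlus B k (extMap f u) :=
  extMap_linearCombination f
    (extMap_hsOn f k fun l => by simp [sigPlusL, extMap_wedgeMon]) u

theorem extMap_sbarMinus (d : ℕ) (u : Ext A) :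
    extMap f (sbarMinus A d u) = sbarMinus B d (extMap f u) :=
  extMap_linearCombination f
    (extMap_hsOn f d fun l => by
      simp [sbarMinusL, extMap_negpow, apply_ite (extMap f), extMap_wedgeMon]) u

theorem extMap_sigPlusSbarMinus (n N : ℕ) (u : Ext A) :
    extMap f (sigPlusSbarMinus A n N u) = sigPlusSbarMinus B n N (extMap f u) := by
  simp [sigPlusSbarMinus, apply_ite (extMap f), extMap_sigPlus, extMap_sbarMinus]

variable {f} in
theorem Prec.map {u v : Ext A} (h : Prec A u v) : Prec B (extMap f u) (extMap f v) := by
  obtain ⟨_, ⟨w, rfl⟩, rfl⟩ := h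
  exact ⟨_, ⟨extMap f w, rfl⟩, by simp [extMap_neg]⟩

end Naturality

section SignedCoefficients

variable (R : Type*) [CommRing R]

/-- The signed coefficient at `S`: the coefficient of `(+1, S)` minus that of `(-1, S)`.  It is the
coordinate at the monomial `S` of the image in the usual exterior algebra, where `(−)` becomes
multiplication by `-1`. -/
noncomputable def signedCoeff (S : Finset ℕ) : Ext R →ₗ[R] R :=
  Finsupp.linearCombination R fun b =>
    if indexSet b = S then if signB b then 1 else -1 else 0

variable {R} {S : Finset ℕ}

theorem signedCoeff_single (b : XB) (a : R) :
    signedCoeff R S (Finsupp.single b a) =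
      a * if indexSet b = S then if signB b then 1 else -1 else 0 := by
  simp [signedCoeff]

theorem signedCoeff_eq_sub (hS : S.Nonempty) (u : Ext R) :
    signedCoeff R S u = u (some (true, ⟨S, hS⟩)) - u (some (false, ⟨S, hS⟩)) := by
  induction u using Finsupp.induction_linear with
  | zero => simp
  | add u v hu hv => rw [map_add, hu, hv]; simp only [Finsupp.add_apply]; ring
  | single b a =>
    rcases b with _ | ⟨_ | _, s⟩
    · simp [signedCoeff_single, indexSet, hS.ne_empty.symm]
    all_goals
      by_cases hs : s.1 = S <;>
        simp [signedCoeff_single, indexSet, signB, Finsupp.single_apply, Subtype.ext_iff, hs]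

theorem signedCoeff_neg (hS : S.Nonempty) (u : Ext R) :
    signedCoeff R S (neg R u) = -signedCoeff R S u := by
  simp [signedCoeff_eq_sub hS, neg_apply, negB]

theorem signedCoeff_negpow (hS : S.Nonempty) (k : ℕ) (u : Ext R) :
    signedCoeff R S (negpow R k u) = (-1) ^ k * signedCoeff R S u := by
  rcases Nat.even_or_odd k with hk | hk
  · simp [negpow, Nat.even_iff.1 hk, hk.neg_one_pow]
  · simp [negpow, Nat.odd_iff.1 hk, hk.neg_one_pow, signedCoeff_neg hS]

theorem signedCoeff_insertB {i : ℕ} {b : XB} (hi : i ∉ indexSet b) :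
    signedCoeff R S (Finsupp.single (insertB i b) 1) =
      if i ∈ S then
        (-1) ^ #{j ∈ S | i < j} * signedCoeff R (S.erase i) (Finsupp.single b 1) else 0 := by
  by_cases hS : insert i (indexSet b) = S
  · subst hS
    rcases Nat.even_or_odd #{j ∈ indexSet b | i < j} with hk | hk <;> cases hb : signB b <;>
      simp [signedCoeff_single, signB_insertB, filter_insert, hi, hb, hk, hk.neg_one_pow]
  · have herase (hiS : i ∈ S) : indexSet b ≠ S.erase i := fun h =>
      hS (h ▸ insert_erase hiS)
    by_cases hiS : i ∈ S <;> simp [signedCoeff_single, hS, hiS, herase]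

theorem signedCoeff_xg_wedge (i : ℕ) (u : Ext R) :
    signedCoeff R S (wedge R (xg R i) u) =
      if i ∈ S then (-1) ^ #{j ∈ S | i < j} * signedCoeff R (S.erase i) u else 0 := by
  rw [xg_wedge]
  induction u using Finsupp.induction_linear with
  | zero => simp
  | add u v hu hv => rw [map_add, map_add, hu, hv, map_add]; split_ifs <;> ring
  | single b a =>
    have hsingle : Finsupp.single b a = a • Finsupp.single b (1 : R) := by simp
    simp only [hsingle, map_smul, Finsupp.linearCombination_single, one_smul, smul_eq_mul]
    by_cases hi : i ∈ indexSet b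
    · have herase : indexSet b ≠ S.erase i := by rintro h; simp [h] at hi
      simp [hi, signedCoeff_single, herase]
    · rw [if_neg hi, signedCoeff_insertB hi, mul_ite, mul_zero, mul_left_comm]

theorem image_filter_gt {α : Type*} [LinearOrder α] {n : ℕ} {s : Fin n → α} (hs : StrictAnti s)
    (j : Fin n) : {k ∈ univ.image s | s j < k} = (Iio j).image s := by
  ext k
  simp only [mem_filter, mem_image, mem_univ, true_and, mem_Iio]
  grind [hs.lt_iff_gt]

theorem image_univ_erase {α : Type*} [DecidableEq α] {n : ℕ} {s : Fin (n + 1) → α}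
    (hs : Function.Injective s) (j : Fin (n + 1)) :
    (univ.image s).erase (s j) = univ.image (s ∘ j.succAbove) := by
  rw [← image_erase hs, ← compl_singleton, ← Fin.image_succAbove_univ, image_image]

theorem signedCoeff_wedgeMon {n : ℕ} {s : Fin n → ℕ} (hs : StrictAnti s) (l : Fin n → ℕ) :
    signedCoeff R (univ.image s) (wedgeMon R (List.ofFn l)) =
      ((1 : Matrix ℕ ℕ R).submatrix l s).det := by
  induction n with
  | zero => simp [wedgeMon, wedgeL, one, signedCoeff_single, indexSet, signB]
  | succ n ih =>
    rw [List.ofFn_succ, wedgeMon_cons, signedCoeff_xg_wedge, Matrix.det_succ_row_zero]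
    split_ifs with h
    · obtain ⟨j, -, hj⟩ := mem_image.1 h
      have hentry (k : Fin (n + 1)) :
          (1 : Matrix ℕ ℕ R) (l 0) (s k) = if j = k then 1 else 0 := by
        simp [Matrix.one_apply, ← hj, hs.injective.eq_iff]
      rw [sum_eq_single j]
      · rw [← hj, image_filter_gt hs, card_image_of_injective _ hs.injective, Fin.card_Iio,
          image_univ_erase hs.injective, ih (hs.comp_strictMono (Fin.strictMono_succAbove j))]
        simp [hentry, Function.comp_def]
      · intro k _ hk
        simp [hentry, hk.symm]
      · simp
    · refine (sum_eq_zero fun j _ => ?_).symm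
      have : l 0 ≠ s j := fun hj => h (hj ▸ mem_image_of_mem s (mem_univ j))
      simp [this]

end SignedCoefficients

section Matrices

variable (R : Type*) [Semiring R]

/-- The matrix of `σ₊(z)` in the basis `x^0, x^1, …`: row `i` holds the coordinates of
`σ₊(z)x^i`. -/
noncomputable def sigPlusMatrix : Matrix ℕ ℕ R⟦X⟧ :=
  Matrix.of fun i j => if i ≤ j then X ^ (j - i) else 0

/-- The coordinates of the factors of `(σ₊(z)x^0) ∧ x^{m_1} ∧ ⋯ ∧ x^{m_n}`, by rows. -/
noncomputable def sigPlusWedgeMatrix {n : ℕ} (m : Fin n → ℕ) : Matrix (Fin (n + 1)) ℕ R⟦X⟧ :=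
  Matrix.of (Fin.cons (sigPlusMatrix R 0) fun i => (1 : Matrix ℕ ℕ R⟦X⟧) (m i))

variable {R}

theorem coeff_sigPlusMatrix (e i j : ℕ) :
    coeff e (sigPlusMatrix R i j) = (1 : Matrix ℕ ℕ R) (i + e) j := by
  rw [sigPlusMatrix, Matrix.of_apply, apply_ite (coeff e), coeff_X_pow, map_zero, Matrix.one_apply]
  grind

theorem coeff_X_pow_sub_mul {k n : ℕ} (hk : k ≤ n) (N : ℕ) (f : R⟦X⟧) :
    coeff N (X ^ (n - k) * f) =
      ∑ b ∈ range (N + 1), if N + k = b + n then coeff b f else 0 := by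
  rw [coeff_X_pow_mul']
  split_ifs with h
  · rw [sum_eq_single (N - (n - k)), if_pos (by omega)]
    · intro b _ hb
      exact if_neg (by omega)
    · intro hb
      exact absurd (mem_range.2 (by omega)) hb
  · exact (sum_eq_zero fun b _ => if_neg (by omega)).symm

end Matrices

section TelescopingMatrix

variable (R : Type*) [Ring R]

/-- The matrix of `z·σ₊(z)σ̄₋(z)` in the basis `x^0, x^1, …`, by rows; `k` is the exponent of `z⁻¹`
in a term of `σ̄₋(z)x^i`, so that `k = 1` occurs for `i ≠ 0` only. -/
noncomputable def sigPlusSbarMinusMatrix : Matrix ℕ ℕ R⟦X⟧ :=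
  Matrix.of fun i j => ∑ k ∈ Iic (min 1 i), (-1) ^ k * X ^ (1 - k) * sigPlusMatrix R (i - k) j

variable {R}

theorem sigPlusSbarMinusMatrix_zero (j : ℕ) :
    sigPlusSbarMinusMatrix R 0 j = X * sigPlusMatrix R 0 j := by
  have hIic : Iic (min 1 0) = ({0} : Finset ℕ) := rfl
  rw [sigPlusSbarMinusMatrix, Matrix.of_apply, hIic, sum_singleton]
  simp

/-- `z σ₊(z)(x^{i+1} - z⁻¹x^i) = -x^i`: the two geometric series telescope. -/
theorem sigPlusSbarMinusMatrix_succ (i j : ℕ) :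
    sigPlusSbarMinusMatrix R (i + 1) j = -(1 : Matrix ℕ ℕ R⟦X⟧) i j := by
  have hIic : Iic (min 1 (i + 1)) = {0, 1} := by
    ext k; simp only [mem_Iic, mem_insert, mem_singleton]; omega
  rw [sigPlusSbarMinusMatrix, Matrix.of_apply, hIic, sum_pair zero_ne_one]
  rcases lt_trichotomy i j with h | rfl | h
  · have hpow : (X : R⟦X⟧) ^ (j - i) = X * X ^ (j - (i + 1)) := by
      rw [← pow_succ']; congr 1; omega
    simp [sigPlusMatrix, h.le, Nat.succ_le_of_lt h, hpow, Matrix.one_apply_ne h.ne]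
  · simp [sigPlusMatrix]
  · simp [sigPlusMatrix, h.not_ge, (h.trans (Nat.lt_succ_self i)).not_ge, Matrix.one_apply_ne h.ne']

end TelescopingMatrix

section Determinants

variable {R : Type*} [CommRing R]

theorem coeff_det {ι : Type*} [Fintype ι] [DecidableEq ι] (M : Matrix ι ι R⟦X⟧) (b : ℕ) :
    coeff b M.det =
      ∑ e ∈ univ.piAntidiag b, (Matrix.of fun i j => coeff (e i) (M i j)).det := by
  have hprod (g : ι → R⟦X⟧) :
      coeff b (∏ i, g i) = ∑ e ∈ univ.piAntidiag b, ∏ i, coeff (e i) (g i) := by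
    rw [coeff_prod]
    exact sum_equiv Finsupp.equivFunOnFinite (fun e => by simp) fun e _ => rfl
  simp only [← Matrix.det_transpose (Matrix.of _), ← Matrix.det_transpose M, Matrix.det_apply,
    Units.smul_def, map_sum, map_zsmul, Matrix.transpose_apply, hprod, Matrix.of_apply, smul_sum]
  exact sum_comm

variable {n : ℕ} {s : Fin (n + 1) → ℕ}

theorem signedCoeff_sigPlus (hs : StrictAnti s) {l : Fin (n + 1) → ℕ} (hl : Antitone l) (b : ℕ) :
    signedCoeff R (univ.image s) (sigPlus R b (wedgeMon R (List.ofFn l))) =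
      coeff b ((sigPlusMatrix R).submatrix l s).det := by
  by_cases hinj : Function.Injective l
  · have hsorted : (List.ofFn l).SortedGT :=
      List.sortedGT_ofFn_iff.2 (hl.strictAnti_of_injective hinj)
    rw [sigPlus, ext1_hsOn_wedgeMon R _ b (by simp) hsorted, sigPlusL_ofFn, map_sum, coeff_det,
      piAntidiag_univ_fin_eq_antidiagonalTuple]
    refine sum_congr rfl fun c _ => ?_
    rw [signedCoeff_wedgeMon hs]
    congr 1
    ext i j
    exact (coeff_sigPlusMatrix (c i) (l i) (s j)).symm
  · have hnodup : ¬(List.ofFn l).Nodup := by rwa [List.nodup_ofFn]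
    obtain ⟨i, j, hij, hne⟩ : ∃ i j, l i = l j ∧ i ≠ j := by
      simpa [Function.Injective] using hinj
    rw [wedgeMon_of_not_nodup R hnodup, Matrix.det_zero_of_row_eq hne (by ext; simp [hij])]
    simp [sigPlus, ext1_eq_linearCombination]

theorem antitone_sub_of_strictAnti {ι : Type*} [PartialOrder ι] {L c : ι → ℕ} (hL : StrictAnti L)
    (hc : ∀ i, c i ≤ 1) : Antitone (L - c) := by
  intro i j hij
  rcases hij.eq_or_lt with rfl | hij
  · rfl
  · have := hL hij
    have := hc i
    simp only [Pi.sub_apply]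
    omega

theorem signedCoeff_sigPlus_sbarMinus (hs : StrictAnti s) {L : Fin (n + 1) → ℕ} (hL : StrictAnti L)
    (b d : ℕ) :
    signedCoeff R (univ.image s) (sigPlus R b (sbarMinus R d (wedgeMon R (List.ofFn L)))) =
      ∑ c ∈ sbarMinusExponents L with ∑ i, c i = d,
        (-1) ^ (∑ i, c i) * coeff b ((sigPlusMatrix R).submatrix (L - c) s).det := by
  rw [sbarMinus, ext1_hsOn_wedgeMon R _ d (by simp) (List.sortedGT_ofFn_iff.2 hL), sbarMinusL_ofFn,
    sigPlus_negpow, signedCoeff_negpow (univ_nonempty.image s), sigPlus, ext1_eq_linearCombination,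
    map_sum, map_sum, mul_sum]
  refine sum_congr rfl fun c hcd => ?_
  obtain ⟨hc, rfl⟩ := mem_filter.1 hcd
  have hanti := antitone_sub_of_strictAnti hL (le_one_of_mem_sbarMinusExponents hc)
  rw [← signedCoeff_sigPlus hs hanti, sigPlus, ext1_eq_linearCombination]

theorem det_sigPlusSbarMinusMatrix_eq_sum (L s : Fin n → ℕ) :
    ((sigPlusSbarMinusMatrix R).submatrix L s).det =
      ∑ c ∈ sbarMinusExponents L,
        (-1) ^ (∑ i, c i) * (X ^ (n - ∑ i, c i) * ((sigPlusMatrix R).submatrix (L - c) s).det) := by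
  have hrow : (sigPlusSbarMinusMatrix R).submatrix L s = fun i => ∑ k ∈ Iic (min 1 (L i)),
      ((-1) ^ k * X ^ (1 - k) : R⟦X⟧) • fun j => sigPlusMatrix R (L i - k) (s j) := by
    ext i j
    simp [sigPlusSbarMinusMatrix]
  rw [hrow]
  refine (Matrix.detRowAlternating.toMultilinearMap.map_sum_finset _ _).trans ?_
  refine sum_congr rfl fun c hc => ?_
  refine (Matrix.detRowAlternating.toMultilinearMap.map_smul_univ _ _).trans ?_
  have hsum : ∑ i, (1 - c i) = n - ∑ i, c i := by
    rw [sum_tsub_distrib _ fun i _ => le_one_of_mem_sbarMinusExponents hc i]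
    simp
  rw [prod_mul_distrib, prod_pow_eq_pow_sum, prod_pow_eq_pow_sum, hsum, smul_eq_mul, mul_assoc]
  rfl

theorem signedCoeff_sigPlusSbarMinus (hs : StrictAnti s) {L : Fin (n + 1) → ℕ} (hL : StrictAnti L)
    (N : ℕ) :
    signedCoeff R (univ.image s) (sigPlusSbarMinus R (n + 1) N (wedgeMon R (List.ofFn L))) =
      coeff N ((sigPlusSbarMinusMatrix R).submatrix L s).det := by
  have hdeg {c} (hc : c ∈ sbarMinusExponents L) : ∑ i, c i ≤ n + 1 := by
    simpa using sum_le_sum fun i (_ : i ∈ univ) => le_one_of_mem_sbarMinusExponents hc i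
  have hsign (k : ℕ) (f : R⟦X⟧) : coeff N ((-1) ^ k * f) = (-1) ^ k * coeff N f := by
    simp [← coeff_C_mul]
  rw [det_sigPlusSbarMinusMatrix_eq_sum, sigPlusSbarMinus, map_sum, map_sum]
  have hexp : ∀ c ∈ sbarMinusExponents L,
      coeff N ((-1) ^ (∑ i, c i) *
        (X ^ (n + 1 - ∑ i, c i) * ((sigPlusMatrix R).submatrix (L - c) s).det)) =
      ∑ b ∈ range (N + 1), if N + ∑ i, c i = b + (n + 1) then
        (-1) ^ (∑ i, c i) * coeff b ((sigPlusMatrix R).submatrix (L - c) s).det else 0 := by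
    intro c hc
    simp only [hsign, coeff_X_pow_sub_mul (hdeg hc), mul_sum, mul_ite, mul_zero]
  rw [sum_congr rfl hexp, sum_comm]
  refine sum_congr rfl fun b _ => ?_
  split_ifs with hb
  · rw [signedCoeff_sigPlus_sbarMinus hs hL, sum_filter]
    refine sum_congr rfl fun c _ => if_congr ?_ rfl rfl
    omega
  · rw [map_zero, sum_eq_zero fun c hc => if_neg ?_]
    have := hdeg hc
    omega

theorem coeff_det_sigPlusWedgeMatrix (m : Fin n → ℕ) (s : Fin (n + 1) → ℕ) (k : ℕ) :
    coeff k ((sigPlusWedgeMatrix R m).submatrix id s).det =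
      ((1 : Matrix ℕ ℕ R).submatrix (Fin.cons k m) s).det := by
  have hminor (t : Fin n → ℕ) : ((1 : Matrix ℕ ℕ R⟦X⟧).submatrix m t).det =
      C ((1 : Matrix ℕ ℕ R).submatrix m t).det := by
    rw [RingHom.map_det]
    congr 1
    ext1 i j
    simp [Matrix.one_apply, apply_ite (C (R := R))]
  rw [Matrix.det_succ_row_zero, Matrix.det_succ_row_zero, map_sum]
  refine sum_congr rfl fun j _ => ?_
  have hsign : ((-1) ^ (j : ℕ) : R⟦X⟧) = C ((-1) ^ (j : ℕ)) := by simp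
  have hsubmatrix :
      ((sigPlusWedgeMatrix R m).submatrix id s).submatrix Fin.succ j.succAbove =
        (1 : Matrix ℕ ℕ R⟦X⟧).submatrix m (s ∘ j.succAbove) := rfl
  have hentry : coeff k ((sigPlusWedgeMatrix R m).submatrix id s 0 j) =
      (1 : Matrix ℕ ℕ R).submatrix (Fin.cons k m) s 0 j :=
    (coeff_sigPlusMatrix k 0 (s j)).trans (by rw [zero_add]; rfl)
  rw [hsubmatrix, hminor, hsign, coeff_mul_C, coeff_C_mul, hentry]
  rfl

/-- The last row on the left is `X` times row `0` on the right, and row `i` is `-1` times row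
`i + 1`; these signs cancel against that of the cyclic permutation of the rows. -/
theorem det_sigPlusSbarMinusMatrix_snoc_zero (m : Fin n → ℕ) (s : Fin (n + 1) → ℕ) :
    ((sigPlusSbarMinusMatrix R).submatrix (Fin.snoc (fun i => m i + 1) 0) s).det =
      X * ((sigPlusWedgeMatrix R m).submatrix id s).det := by
  have hrows : (sigPlusSbarMinusMatrix R).submatrix (Fin.snoc (fun i => m i + 1) 0) s =
      Matrix.of fun i j => (Fin.snoc (fun _ : Fin n => -1) X : Fin (n + 1) → R⟦X⟧) i *
        ((sigPlusWedgeMatrix R m).submatrix id s).submatrix (finRotate (n + 1)) id i j := by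
    ext1 i j
    refine Fin.lastCases ?_ (fun i => ?_) i
    · simp [sigPlusWedgeMatrix, sigPlusSbarMinusMatrix_zero]
    · simp [sigPlusWedgeMatrix, sigPlusSbarMinusMatrix_succ]
  have hsigns : (-1) ^ n * (-1) ^ n = (1 : R⟦X⟧) := by rw [← mul_pow]; simp
  rw [hrows, Matrix.det_mul_column, Matrix.det_permute, sign_finRotate, Fin.prod_snoc]
  simp only [prod_const, card_univ, Fintype.card_fin, add_tsub_cancel_right,
    Units.val_pow_eq_pow_val, Units.val_neg, Units.val_one, Int.cast_pow, Int.cast_neg,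
    Int.cast_one]
  linear_combination X * ((sigPlusWedgeMatrix R m).submatrix id s).det * hsigns

end Determinants

section Surpassing

theorem isQuasiZero_of_neg_eq {A : Type*} [CommSemiring A] {q : Ext A} (hq : neg A q = q)
    (hone : q none = 0) : IsQuasiZero A q := by
  refine ⟨q.filter (signB · = true), ?_⟩
  ext b
  have hqb : q (negB b) = q b := by rw [← neg_apply, hq]
  simp only [Finsupp.add_apply, neg_apply, Finsupp.filter_apply]
  rcases b with _ | ⟨_ | _, s⟩ <;> simp_all [negB, signB]

/-- The coefficients of `(+1, S)` and `(-1, S)` in `v - u` are equal, and they are nonnegative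
because one of those in `u` vanishes. -/
theorem prec_of_signedCoeff_eq {n : ℕ} (hn : n ≠ 0) {u v : Ext ℕ} (hu : u ∈ homogeneous ℕ n)
    (hv : v ∈ homogeneous ℕ n) (hsign : ∀ b, u b = 0 ∨ u (negB b) = 0)
    (h : ∀ S : Finset ℕ, #S = n →
      signedCoeff ℤ S (extMap (Nat.castRingHom ℤ) u) =
        signedCoeff ℤ S (extMap (Nat.castRingHom ℤ) v)) : Prec ℕ u v := by
  have hzero {w : Ext ℕ} (hw : w ∈ homogeneous ℕ n) {b : XB} (hb : #(indexSet b) ≠ n) : w b = 0 :=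
    (Finsupp.mem_supported' ℕ w).1 hw b hb
  have hnone {w : Ext ℕ} (hw : w ∈ homogeneous ℕ n) : w none = 0 := hzero hw hn.symm
  have hbalance (b : XB) : u b + v (negB b) = v b + u (negB b) := by
    rcases b with _ | ⟨ε, S, hne⟩
    · simp [negB, hnone hu, hnone hv]
    by_cases hS : #S = n
    · have hdiff := h S hS
      rw [signedCoeff_eq_sub hne, signedCoeff_eq_sub hne] at hdiff
      simp only [extMap_apply, Nat.coe_castRingHom] at hdiff
      cases ε <;> simp only [negB, Bool.not_true, Bool.not_false] <;> omega
    · have hS' (δ : Bool) : #(indexSet (some (δ, ⟨S, hne⟩))) ≠ n := hS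
      simp only [negB, hzero hu (hS' _), hzero hv (hS' _)]
  have hle : u ≤ v := fun b => by
    rcases hsign b with hb | hb <;> have := hbalance b <;> omega
  refine ⟨v - u, isQuasiZero_of_neg_eq ?_ ?_, (add_tsub_cancel_of_le hle).symm⟩
  · ext b
    have := hbalance b
    have := hle b
    have := hle (negB b)
    simp only [neg_apply, Finsupp.tsub_apply]
    omega
  · simp [hnone hu, hnone hv]

theorem exists_strictAnti_image_eq {α : Type*} [LinearOrder α] {S : Finset α} {n : ℕ}
    (hS : #S = n) : ∃ s : Fin n → α, StrictAnti s ∧ univ.image s = S := by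
  refine ⟨S.orderEmbOfFin hS ∘ Fin.rev,
    (S.orderEmbOfFin hS).strictMono.comp_strictAnti Fin.rev_strictAnti, ?_⟩
  rw [← image_image, image_univ_of_surjective Fin.rev_surjective, image_orderEmbOfFin_univ]

theorem wedgeMon_apply_eq_zero_or {A : Type*} [CommSemiring A] {l : List ℕ} (hl : l ≠ [])
    (b : XB) : wedgeMon A l b = 0 ∨ wedgeMon A l (negB b) = 0 := by
  by_cases hnodup : l.Nodup
  · obtain ⟨c, hc, hlc⟩ := exists_wedgeMon_eq_single A hnodup
    have hcb : c ≠ b ∨ c ≠ negB b := by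
      by_contra! ⟨rfl, hneg⟩
      rcases c with _ | ⟨ε, s⟩
      · exact hl (List.toFinset_eq_empty_iff l |>.1 hc.symm)
      · simp [negB] at hneg
    rw [hlc]
    exact hcb.imp Finsupp.single_eq_of_ne' Finsupp.single_eq_of_ne'
  · simp [wedgeMon_of_not_nodup A hnodup]

theorem sigPlus_xg (A : Type*) [CommSemiring A] (k i : ℕ) :
    sigPlus A k (xg A i) = xg A (i + k) := by
  have hsorted : (List.ofFn ![i]).SortedGT := List.sortedGT_ofFn_iff.2 (Subsingleton.strictAnti _)
  have hi : wedgeMon A (List.ofFn ![i]) = xg A i := by simp [wedgeMon_singleton]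
  rw [← hi, sigPlus, ext1_hsOn_wedgeMon A _ k (by simp) hsorted, sigPlusL_ofFn,
    Nat.antidiagonalTuple_one, sum_singleton]
  simp [wedgeMon_singleton]

variable (A : Type*) [CommSemiring A] {n : ℕ} {m : Fin n → ℕ}

theorem strictAnti_snoc_zero (hm : StrictAnti m) :
    StrictAnti (Fin.snoc (fun i => m i + 1) 0 : Fin (n + 1) → ℕ) := by
  intro i j hij
  induction i using Fin.lastCases with
  | last => exact absurd hij (Fin.le_last j).not_gt
  | cast i =>
    induction j using Fin.lastCases with
    | last => simp
    | cast j => simpa using hm (Fin.castSucc_lt_castSucc_iff.1 hij)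

theorem prec_sigPlusSbarMinus_of_signedCoeff_eq (hm : StrictAnti m) {N : ℕ} {u : Ext ℕ}
    (hu : u ∈ homogeneous ℕ (n + 1)) (hsign : ∀ b, u b = 0 ∨ u (negB b) = 0)
    (h : ∀ s : Fin (n + 1) → ℕ, StrictAnti s →
      signedCoeff ℤ (univ.image s) (extMap (Nat.castRingHom ℤ) u) =
        coeff N (X * ((sigPlusWedgeMatrix ℤ m).submatrix id s).det)) :
    Prec A (extMap (Nat.castRingHom A) u)
      (sigPlusSbarMinus A (n + 1) N (wedgeMon A ((List.ofFn fun i => m i + 1) ++ [0]))) := by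
  have hlist : (List.ofFn fun i => m i + 1) ++ [0] =
      List.ofFn (Fin.snoc (fun i => m i + 1) 0 : Fin (n + 1) → ℕ) := by
    rw [List.ofFn_succ']
    simp
  rw [hlist, ← extMap_wedgeMon (Nat.castRingHom A), ← extMap_sigPlusSbarMinus]
  refine Prec.map (prec_of_signedCoeff_eq n.succ_ne_zero hu
    (sigPlusSbarMinus_mem_homogeneous _ _ ?_) hsign fun S hS => ?_)
  · simpa using wedgeMon_mem_homogeneous (A := ℕ)
      (List.ofFn (Fin.snoc (fun i => m i + 1) 0 : Fin (n + 1) → ℕ))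
  · obtain ⟨s, hs, rfl⟩ := exists_strictAnti_image_eq hS
    rw [h s hs, extMap_sigPlusSbarMinus, extMap_wedgeMon,
      signedCoeff_sigPlusSbarMinus hs (strictAnti_snoc_zero hm),
      det_sigPlusSbarMinusMatrix_snoc_zero]

theorem wedgeMon_cons_prec_sigPlusSbarMinus (hm : StrictAnti m) (k : ℕ) :
    Prec A (wedgeMon A (k :: List.ofFn m))
      (sigPlusSbarMinus A (n + 1) (k + 1) (wedgeMon A ((List.ofFn fun i => m i + 1) ++ [0]))) := by
  rw [← extMap_wedgeMon (Nat.castRingHom A) (k :: _)]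
  refine prec_sigPlusSbarMinus_of_signedCoeff_eq A hm ?_
    (wedgeMon_apply_eq_zero_or (List.cons_ne_nil k _)) fun s hs => ?_
  · simpa using wedgeMon_mem_homogeneous (A := ℕ) (k :: List.ofFn m)
  · rw [extMap_wedgeMon, coeff_succ_X_mul, coeff_det_sigPlusWedgeMatrix, ← signedCoeff_wedgeMon hs,
      List.ofFn_cons]

theorem zero_prec_sigPlusSbarMinus (hm : StrictAnti m) :
    Prec A 0
      (sigPlusSbarMinus A (n + 1) 0 (wedgeMon A ((List.ofFn fun i => m i + 1) ++ [0]))) := by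
  rw [← map_zero (extMap (Nat.castRingHom A))]
  exact prec_sigPlusSbarMinus_of_signedCoeff_eq A hm (zero_mem _) (fun b => .inl rfl)
    fun s _ => by simp

theorem sum_sigPlus_sbarMinus_eq_sigPlusSbarMinus {a : ℤ} (ha : -1 ≤ a) (r : ℕ) (u : Ext A) :
    (∑ b ∈ range (a + 2).toNat,
      if a ≤ (b : ℤ) + r then sigPlus A b (sbarMinus A ((b : ℤ) - a + r).toNat u) else 0) =
      sigPlusSbarMinus A (r + 1) (a + 1).toNat u := by
  have hrange : (a + 2).toNat = (a + 1).toNat + 1 := by omega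
  rw [sigPlusSbarMinus, hrange]
  refine sum_congr rfl fun b _ => if_ctx_congr (by omega) (fun h => ?_) fun _ => rfl
  have hexp : ((b : ℤ) - a + r).toNat = b + (r + 1) - (a + 1).toNat := by omega
  rw [hexp]

theorem strictAnti_sub_add {r : ℕ} {lam : Fin r → ℕ} (hlam : Antitone lam) :
    StrictAnti fun i : Fin r => r - 1 - (i : ℕ) + lam i := by
  intro i j hij
  have := hlam hij.le
  simp only
  omega

end Surpassing

end ExtSemi

namespace ExtSemi

/-- For every `r ≥ 1` and every partition `λ` with at most `r`
parts: `(σ₊(z)x^0) ∧ [x]^r_λ ⪯ z^r · σ₊(z)(σ̄₋(z)(x^{r+λ_1} ∧ ⋯ ∧ x^{1+λ_r} ∧ x^0))`,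
coefficientwise in the powers `z^a` (`a ∈ ℤ`).  The coefficient of `z^a` of the
left side is `σ_a(x^0) ∧ [x]^r_λ` for `a ≥ 0` (and `0` otherwise); the coefficient
of `z^a` of the right side is the convolution `Σ_{b−d = a−r} σ₊_b ∘ σ̄₋_d`
applied to `x^{r+λ_1} ∧ x^{r−1+λ_2} ∧ ⋯ ∧ x^{1+λ_r} ∧ x^0` (here finitized: terms
with `d > r + 1` vanish since `σ̄₋_d` kills monomials of length `r + 1`). -/
theorem sigma_plus_wedge_surpassed (A : Type*) [CommSemiring A]
    (r : ℕ) (hr : 1 ≤ r) (lam : Fin r → ℕ) (hlam : Antitone lam) (a : ℤ) :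
    Prec A
      (if 0 ≤ a then wedge A (sigPlus A a.toNat (xg A 0)) (xlam A r lam) else 0)
      (∑ b ∈ Finset.range (a + 2).toNat,
        if a ≤ (b : ℤ) + (r : ℤ) then
          sigPlus A b (sbarMinus A (((b : ℤ) - a + (r : ℤ)).toNat)
            (wedgeMon A ((List.ofFn fun i : Fin r => (r - (i : ℕ)) + lam i) ++ [0])))
        else 0) := by
  rcases lt_or_ge a (-1) with ha | ha
  · rw [if_neg (by omega), Int.toNat_of_nonpos (by omega)]
    exact ⟨0, ⟨0, by simp⟩, by simp⟩
  have hexponents : (List.ofFn fun i : Fin r => r - (i : ℕ) + lam i) =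
      List.ofFn fun i : Fin r => (r - 1 - (i : ℕ) + lam i) + 1 := by
    congr 1
    ext i
    omega
  have hm := strictAnti_sub_add hlam
  rw [sum_sigPlus_sbarMinus_eq_sigPlusSbarMinus A ha, hexponents]
  obtain rfl | ⟨k, rfl⟩ : a = -1 ∨ ∃ k : ℕ, a = k := by
    rcases ha.eq_or_lt with ha | ha
    exacts [.inl ha.symm, .inr (Int.eq_ofNat_of_zero_le ha)]
  · exact zero_prec_sigPlusSbarMinus A hm
  · rw [if_pos (Int.natCast_nonneg k), Int.toNat_natCast, sigPlus_xg, zero_add]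
    exact wedgeMon_cons_prec_sigPlusSbarMinus A hm k

end ExtSemi
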